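/- Let X = {a, b, c} be a three-letter alphabet and V₃ ⊆ {a,b}* be the least language satisfying V₃ = {a} ∪ {b}·V₃·V₃·V₃. Then the open ω-language F₁ := V₃·c·X^ω ⊆ X^ω does not have the Automatic Baire property. -/

import Mathlib

open Set MeasureTheory Computability

namespace AutoBaire

/-- The Cantor topology on the space of ω-words over `X`:
the product of the discrete topology on `X`. -/
def cantorTop (X : Type) : TopologicalSpace (ℕ → X) :=
  @Pi.topologicalSpace ℕ (fun _ => X) (fun _ => ⊥)

/-- The Borel σ-algebra of the Cantor space. -/
def cantorBorel (X : Type) : MeasurableSpace (ℕ → X) :=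
  @borel (ℕ → X) (cantorTop X)

variable {X : Type}

/-- Concatenation `w·ξ` of a finite word with an ω-word. -/
def wcat (w : List X) (ξ : ℕ → X) : ℕ → X :=
  Stream'.appendStream' w ξ

/-- The ball (cylinder) `w·X^ω`. -/
def cyl (w : List X) : Set (ℕ → X) := {ξ | ∃ η : ℕ → X, ξ = wcat w η}

/-- The ω-language `W·A` for a language `W` and an ω-language `A`. -/
def catOmega (W : Language X) (A : Set (ℕ → X)) : Set (ℕ → X) :=
  {ξ | ∃ w ∈ W, ∃ η ∈ A, ξ = wcat w η}

/-- `V^ω`: the set of ω-words that are infinite concatenations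
`v₁·v₂·⋯` of non-empty words `vᵢ ∈ V`. -/
def omegaPow (V : Language X) : Set (ℕ → X) :=
  {ξ | ∃ f : ℕ → List X, (∀ i, f i ∈ V ∧ f i ≠ []) ∧
    ∀ k, ξ ∈ cyl (((List.range k).map f).flatten)}

/-- Regular languages: those obtained from finite languages via the operations
union, concatenation and star. -/
inductive IsRegLang : Language X → Prop
  | finite (W : Language X) : (W : Set (List X)).Finite → IsRegLang W
  | union (W V : Language X) : IsRegLang W → IsRegLang V → IsRegLang (W + V)
  | concat (W V : Language X) : IsRegLang W → IsRegLang V → IsRegLang (W * V)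
  | star (W : Language X) : IsRegLang W → IsRegLang (W∗)

/-- Regular ω-languages: finite unions `⋃ᵢ Wᵢ·Vᵢ^ω` with `Wᵢ, Vᵢ` regular. -/
def IsRegOmega (F : Set (ℕ → X)) : Prop :=
  ∃ (n : ℕ) (W V : Fin n → Language X),
    (∀ i, IsRegLang (W i) ∧ IsRegLang (V i)) ∧
    F = ⋃ i, catOmega (W i) (omegaPow (V i))

/-- `X*·w·X^ω`: the set of ω-words containing `w` as an infix. -/
def infixOcc (w : List X) : Set (ℕ → X) :=
  {ξ | ∃ u : List X, ξ ∈ cyl (u ++ w)}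

/-- An ω-word is disjunctive if every finite word occurs in it as an infix. -/
def Disjunctive (ξ : ℕ → X) : Prop := ∀ w : List X, ξ ∈ infixOcc w

/-- Ultimately periodic ω-words: `ξ = w·v·v·v·⋯` with `v ≠ e`. -/
def UltPeriodic (ξ : ℕ → X) : Prop :=
  ∃ (w v : List X) (h : v ≠ []), ξ = wcat w (Stream'.cycle v h)

/-- The Automatic Baire property: `F Δ E ⊆ F'` for some regular open
ω-language `E` and some regular ω-language `F'` of first Baire category. -/
def HasABP (F : Set (ℕ → X)) : Prop :=
  ∃ E F' : Set (ℕ → X),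
    IsRegOmega E ∧ @IsOpen _ (cantorTop X) E ∧
    IsRegOmega F' ∧ @IsMeagre _ (cantorTop X) F' ∧
    symmDiff F E ⊆ F'

/-- The measure is finite and non-null: `0 < μ(X^ω) < ∞`. -/
def FiniteNonNull (μ : @MeasureTheory.Measure (ℕ → X) (cantorBorel X)) : Prop :=
  0 < μ Set.univ ∧ μ Set.univ < ⊤

/-- `supp(μ) = X^ω`: every non-empty open set has positive measure. -/
def FullSupport (μ : @MeasureTheory.Measure (ℕ → X) (cantorBorel X)) : Prop :=
  ∀ U : Set (ℕ → X), @IsOpen _ (cantorTop X) U → U.Nonempty → 0 < μ U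

/-- The balance condition: there is `c > 0` such that for all `w ∈ X*`, `x ∈ X`
either `μ(wx·X^ω) = 0` or `c·μ(w·X^ω) ≤ μ(wx·X^ω)`. -/
def Balanced (μ : @MeasureTheory.Measure (ℕ → X) (cantorBorel X)) : Prop :=
  ∃ c : ENNReal, 0 < c ∧ ∀ (w : List X) (x : X),
    μ (cyl (w ++ [x])) = 0 ∨ c * μ (cyl w) ≤ μ (cyl (w ++ [x]))


/-- The fixed-point equation `V = {a} ∪ {b}·V·V·V`. -/
def V3Eq (a b : X) (V : Language X) : Prop :=
  ∀ u : List X, u ∈ V ↔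
    (u = [a] ∨ ∃ v₁ ∈ V, ∃ v₂ ∈ V, ∃ v₃ ∈ V, u = [b] ++ v₁ ++ v₂ ++ v₃)

/-!
If `V·c·X^ω`, with `c` not occurring in the words of `V`, agrees with a regular ω-language `E` up
to a meagre set, then `V` is regular: a regular ω-language has only finitely many residuals
`{ξ | u·ξ ∈ E}`, and the left quotient of `V` by a `c`-free word `u` can be read off from the
residual by `u`, since a `c`-free word `w` lies in it iff `E` is not meagre in the cylinder
`u·w·c·X^ω`. The words of `V₃` contain `2k + 1` letters `a` for `k` letters `b`, so `a^(2n+1)`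
separates the left quotient of `V₃` by `b^n` from those by the other powers of `b`, and `V₃` is not
regular.
-/

/-! ### Closure properties of regular languages -/

section Closure

variable {α : Type*}

theorem isRegular_of_finite_of_forall_mem_leftQuotient {L : Language α} {S : Set (Language α)}
    (hS : S.Finite)
    (h : ∀ u, ∀ y ∈ L.leftQuotient u, ∃ M ∈ S, y ∈ M ∧ M ≤ L.leftQuotient u) : L.IsRegular := by
  refine .of_finite_range_leftQuotient ((hS.finite_subsets.image
    fun T : Set (Language α) => ({y | ∃ M ∈ T, y ∈ M} : Language α)).subset ?_)
  rintro _ ⟨u, rfl⟩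
  refine ⟨{M ∈ S | M ≤ L.leftQuotient u}, fun M hM => hM.1, ?_⟩
  ext y
  constructor
  · rintro ⟨M, ⟨_, hM⟩, hy⟩
    exact hM hy
  · intro hy
    obtain ⟨M, hMS, hyM, hM⟩ := h u y hy
    exact ⟨M, ⟨hMS, hM⟩, hyM⟩

theorem isRegular_of_finite {L : Language α} (hL : (L : Set (List α)).Finite) : L.IsRegular := by
  have hsuffixes : (⋃ w ∈ (L : Set (List α)), {y | y ∈ w.tails}).Finite :=
    hL.biUnion fun w _ => List.finite_toSet w.tails
  refine .of_finite_range_leftQuotient (hsuffixes.finite_subsets.subset ?_)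
  rintro _ ⟨u, rfl⟩ y hy
  exact mem_biUnion hy ((List.mem_tails _ _).2 (List.suffix_append u y))

theorem isRegular_mul {L M : Language α} (hL : L.IsRegular) (hM : M.IsRegular) :
    (L * M).IsRegular := by
  refine isRegular_of_finite_of_forall_mem_leftQuotient
    (S := (· * M) '' range L.leftQuotient ∪ range M.leftQuotient)
    ((hL.finite_range_leftQuotient.image _).union hM.finite_range_leftQuotient) ?_
  intro u y hy
  obtain ⟨w, hw, v, hv, huy⟩ := Language.mem_mul.1 hy
  rcases List.append_eq_append_iff.1 huy with ⟨t, rfl, rfl⟩ | ⟨t, rfl, rfl⟩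
  · refine ⟨M.leftQuotient t, .inr ⟨t, rfl⟩, hv, fun z hz => ?_⟩
    exact Language.mem_mul.2 ⟨w, hw, t ++ z, hz, (List.append_assoc ..).symm⟩
  · refine ⟨L.leftQuotient u * M, .inl ⟨_, ⟨u, rfl⟩, rfl⟩,
      Language.append_mem_mul hw hv, fun z hz => ?_⟩
    obtain ⟨p, hp, q, hq, rfl⟩ := Language.mem_mul.1 hz
    exact Language.mem_mul.2 ⟨u ++ p, hp, q, hq, List.append_assoc ..⟩

theorem append_mem_kstar {L : Language α} {u v : List α} (hu : u ∈ L∗) (hv : v ∈ L∗) :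
    u ++ v ∈ L∗ := by
  rw [← kstar_mul_kstar]
  exact Language.append_mem_mul hu hv

theorem mem_kstar_of_mem {L : Language α} {u : List α} (hu : u ∈ L) : u ∈ L∗ :=
  (le_kstar : L ≤ L∗) hu

theorem exists_of_append_mem_kstar {L : Language α} {u y : List α} (h : u ++ y ∈ L∗) :
    (u ∈ L∗ ∧ y ∈ L∗) ∨ ∃ u₁ ∈ L∗, ∃ u₂ y₁, u₂ ++ y₁ ∈ L ∧ ∃ y₂ ∈ L∗,
      u = u₁ ++ u₂ ∧ y = y₁ ++ y₂ := by
  obtain ⟨l, hl, hmem⟩ := Language.mem_kstar.1 h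
  clear h
  induction l generalizing u with
  | nil =>
    obtain ⟨rfl, rfl⟩ : u = [] ∧ y = [] := by simpa using hl
    exact .inl ⟨Language.nil_mem_kstar L, Language.nil_mem_kstar L⟩
  | cons w l ih =>
    obtain ⟨hw, hl_mem⟩ := List.forall_mem_cons.1 hmem
    rw [List.flatten_cons] at hl
    rcases List.append_eq_append_iff.1 hl with ⟨t, rfl, rfl⟩ | ⟨t, rfl, ht⟩
    · exact .inr ⟨[], Language.nil_mem_kstar L, u, t, hw, _, Language.join_mem_kstar hl_mem,
        rfl, rfl⟩
    · rcases ih ht.symm hl_mem with ⟨ht_mem, hy⟩ | ⟨u₁, hu₁, u₂, y₁, hmid, y₂, hy₂, rfl, rfl⟩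
      · exact .inl ⟨append_mem_kstar (mem_kstar_of_mem hw) ht_mem, hy⟩
      · exact .inr ⟨w ++ u₁, append_mem_kstar (mem_kstar_of_mem hw) hu₁, u₂, y₁, hmid, y₂, hy₂,
          (List.append_assoc ..).symm, rfl⟩

theorem isRegular_kstar {L : Language α} (hL : L.IsRegular) : (L∗).IsRegular := by
  refine isRegular_of_finite_of_forall_mem_leftQuotient
    (S := (· * L∗) '' range L.leftQuotient ∪ {L∗})
    ((hL.finite_range_leftQuotient.image _).union (finite_singleton _)) ?_
  intro u y hy
  rcases exists_of_append_mem_kstar hy with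
    ⟨hu, hy⟩ | ⟨u₁, hu₁, u₂, y₁, hmid, y₂, hy₂, rfl, rfl⟩
  · exact ⟨L∗, .inr rfl, hy, fun z hz => append_mem_kstar hu hz⟩
  · refine ⟨L.leftQuotient u₂ * L∗, .inl ⟨_, ⟨u₂, rfl⟩, rfl⟩,
      Language.append_mem_mul hmid hy₂, fun z hz => ?_⟩
    obtain ⟨p, hp, q, hq, rfl⟩ := Language.mem_mul.1 hz
    have hregroup : u₁ ++ u₂ ++ (p ++ q) = u₁ ++ ((u₂ ++ p) ++ q) := by
      simp only [List.append_assoc]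
    exact (Language.mem_leftQuotient ..).2
      (hregroup ▸ append_mem_kstar hu₁ (append_mem_kstar (mem_kstar_of_mem hp) hq))

end Closure

theorem IsRegLang.isRegular {L : Language X} (hL : IsRegLang L) : L.IsRegular := by
  induction hL with
  | finite L hL => exact isRegular_of_finite hL
  | union L M _ _ hL hM => exact hL.add hM
  | concat L M _ _ hL hM => exact isRegular_mul hL hM
  | star L _ hL => exact isRegular_kstar hL

/-! ### Residuals of regular ω-languages -/

theorem wcat_append (u v : List X) (ξ : ℕ → X) : wcat (u ++ v) ξ = wcat u (wcat v ξ) :=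
  Stream'.append_append_stream u v ξ

theorem wcat_injective (u : List X) : Function.Injective (wcat u) :=
  fun ξ η => Stream'.append_right_injective u ξ η

theorem image_wcat_singleton (x : X) (A : Set (ℕ → X)) :
    wcat [x] '' A = (fun ξ => ξ 0) ⁻¹' {x} ∩ (fun ξ n => ξ (n + 1)) ⁻¹' A := by
  ext ξ
  constructor
  · rintro ⟨η, hη, rfl⟩
    exact ⟨rfl, hη⟩
  · rintro ⟨hx, hξ⟩
    refine ⟨_, hξ, funext fun n => ?_⟩
    cases n with
    | zero => exact hx.symm
    | succ n => rfl

theorem exists_append_of_wcat_eq_wcat {u v : List X} {ξ η : ℕ → X} (h : wcat u ξ = wcat v η)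
    (hle : u.length ≤ v.length) : ∃ t, v = u ++ t ∧ ξ = wcat t η := by
  have hsplit : wcat u ξ = wcat (v.take u.length) (wcat (v.drop u.length) η) := by
    rw [← wcat_append, List.take_append_drop, h]
  have hu : u = v.take u.length :=
    Stream'.append_left_injective _ _ _ _ hsplit (by rw [List.length_take_of_le hle])
  rw [← hu] at hsplit
  exact ⟨v.drop u.length, (List.prefix_iff_eq_append.1 (List.prefix_iff_eq_take.2 hu)).symm,
    wcat_injective u hsplit⟩

theorem catOmega_mul (L M : Language X) (A : Set (ℕ → X)) :
    catOmega (L * M) A = catOmega L (catOmega M A) := by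
  ext ξ
  constructor
  · rintro ⟨_, hw, η, hη, rfl⟩
    obtain ⟨u, hu, v, hv, rfl⟩ := Language.mem_mul.1 hw
    exact ⟨u, hu, _, ⟨v, hv, η, hη, rfl⟩, wcat_append u v η⟩
  · rintro ⟨u, hu, _, ⟨v, hv, η, hη, rfl⟩, rfl⟩
    exact ⟨u ++ v, Language.append_mem_mul hu hv, η, hη, (wcat_append u v η).symm⟩

theorem wcat_mem_omegaPow {V : Language X} {v : List X} {ξ : ℕ → X} (hv : v ∈ V)
    (hξ : ξ ∈ omegaPow V) : wcat v ξ ∈ omegaPow V := by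
  rcases eq_or_ne v [] with rfl | hne
  · exact hξ
  obtain ⟨f, hf, hprefix⟩ := hξ
  refine ⟨fun n => Nat.casesOn n v f, fun i => ?_, fun k => ?_⟩
  · cases i with
    | zero => exact ⟨hv, hne⟩
    | succ i => exact hf i
  · cases k with
    | zero => exact ⟨_, rfl⟩
    | succ k =>
      obtain ⟨ζ, rfl⟩ := hprefix k
      refine ⟨ζ, ?_⟩
      rw [List.range_succ_eq_map, List.map_cons, List.flatten_cons, List.map_map, wcat_append]
      rfl

theorem catOmega_kstar_omegaPow (V : Language X) :
    catOmega V∗ (omegaPow V) = omegaPow V := by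
  refine Subset.antisymm ?_ fun ξ hξ => ⟨[], Language.nil_mem_kstar V, ξ, hξ, rfl⟩
  rintro _ ⟨v, hv, ξ, hξ, rfl⟩
  obtain ⟨l, rfl, hl⟩ := Language.mem_kstar.1 hv
  clear hv
  induction l with
  | nil => exact hξ
  | cons w l ih =>
    obtain ⟨hw, hl⟩ := List.forall_mem_cons.1 hl
    rw [List.flatten_cons, wcat_append]
    exact wcat_mem_omegaPow hw (ih hl)

theorem exists_eq_wcat_of_mem_omegaPow {V : Language X} {ξ : ℕ → X} (hξ : ξ ∈ omegaPow V) :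
    ∃ v ∈ V, v ≠ [] ∧ ∃ η ∈ omegaPow V, ξ = wcat v η := by
  obtain ⟨f, hf, hprefix⟩ := hξ
  have hflatten : ∀ k, ((List.range (k + 1)).map f).flatten =
      f 0 ++ ((List.range k).map fun i => f (i + 1)).flatten := fun k => by
    rw [List.range_succ_eq_map, List.map_cons, List.flatten_cons, List.map_map]
    rfl
  obtain ⟨η, rfl⟩ : ξ ∈ cyl (f 0) := by simpa using hprefix 1
  refine ⟨f 0, (hf 0).1, (hf 0).2, η, ⟨fun i => f (i + 1), fun i => hf (i + 1), fun k => ?_⟩, rfl⟩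
  obtain ⟨ζ, hζ⟩ := hprefix (k + 1)
  rw [hflatten, wcat_append] at hζ
  exact ⟨ζ, wcat_injective _ hζ⟩

theorem exists_long_prefix_of_mem_omegaPow {V : Language X} {ξ : ℕ → X} (hξ : ξ ∈ omegaPow V)
    (n : ℕ) : ∃ v ∈ V∗, n ≤ v.length ∧ ∃ η ∈ omegaPow V, ξ = wcat v η := by
  induction n with
  | zero => exact ⟨[], Language.nil_mem_kstar V, le_rfl, ξ, hξ, rfl⟩
  | succ n ih =>
    obtain ⟨v, hv, hle, η, hη, rfl⟩ := ih
    obtain ⟨w, hw, hne, ζ, hζ, rfl⟩ := exists_eq_wcat_of_mem_omegaPow hη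
    refine ⟨v ++ w, append_mem_kstar hv (mem_kstar_of_mem hw), ?_, ζ, hζ,
      (wcat_append v w ζ).symm⟩
    rw [List.length_append]
    exact Nat.add_le_add hle (List.length_pos_iff.2 hne)

theorem preimage_wcat_catOmega_omegaPow (W V : Language X) (u : List X) :
    wcat u ⁻¹' catOmega W (omegaPow V) = catOmega ((W * V∗).leftQuotient u) (omegaPow V) := by
  ext ξ
  constructor
  · rintro ⟨w, hw, η, hη, heq⟩
    obtain ⟨v, hv, hle, ζ, hζ, rfl⟩ := exists_long_prefix_of_mem_omegaPow hη u.length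
    rw [← wcat_append] at heq
    obtain ⟨t, ht, rfl⟩ := exists_append_of_wcat_eq_wcat heq
      (hle.trans (by simp only [List.length_append, Nat.le_add_left]))
    refine ⟨t, ?_, ζ, hζ, rfl⟩
    rw [Language.mem_leftQuotient, ← ht]
    exact Language.append_mem_mul hw hv
  · rintro ⟨t, ht, η, hη, rfl⟩
    rw [← catOmega_kstar_omegaPow, ← catOmega_mul]
    exact ⟨u ++ t, ht, η, hη, (wcat_append u t η).symm⟩

theorem IsRegOmega.finite_range_preimage_wcat {E : Set (ℕ → X)} (hE : IsRegOmega E) :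
    (range fun u => wcat u ⁻¹' E).Finite := by
  obtain ⟨n, W, V, hreg, rfl⟩ := hE
  have hquot : ∀ i, (range (W i * (V i)∗).leftQuotient).Finite := fun i =>
    (isRegular_mul (hreg i).1.isRegular
      (isRegular_kstar (hreg i).2.isRegular)).finite_range_leftQuotient
  refine ((Finite.pi hquot).image fun Q => ⋃ i, catOmega (Q i) (omegaPow (V i))).subset ?_
  rintro _ ⟨u, rfl⟩
  refine ⟨fun i => (W i * (V i)∗).leftQuotient u, fun i _ => ⟨u, rfl⟩, ?_⟩
  simp only [preimage_iUnion, preimage_wcat_catOmega_omegaPow]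

/-! ### Delimited ω-languages -/

/-- The ω-language `V·c·X^ω` of the ω-words in which some word of `V` is followed by the letter `c`;
it is used with a delimiter `c` that does not occur in the words of `V`. -/
def delimited (V : Language X) (c : X) : Set (ℕ → X) :=
  {ξ | ∃ v ∈ V, ξ ∈ cyl (v ++ [c])}

theorem eq_of_wcat_append_singleton_eq {c : X} {u v : List X} {ξ η : ℕ → X} (hu : c ∉ u)
    (hv : c ∉ v) (h : wcat (u ++ [c]) ξ = wcat (v ++ [c]) η) : u = v := by
  wlog hle : u.length ≤ v.length generalizing u v ξ η
  · exact (this hv hu h.symm (le_of_not_ge hle)).symm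
  obtain ⟨t, ht, -⟩ := exists_append_of_wcat_eq_wcat h (by simpa using hle)
  rcases t.eq_nil_or_concat with rfl | ⟨t, d, rfl⟩
  · simpa using ht.symm
  · rw [List.concat_eq_append, ← List.append_assoc] at ht
    have hvt : v = u ++ [c] ++ t := (List.append_inj' ht rfl).1
    simp [hvt] at hv

theorem mem_delimited_iff {V : Language X} {c : X} (hV : ∀ v ∈ V, c ∉ v) {u : List X}
    (hu : c ∉ u) {ξ : ℕ → X} (hξ : ξ ∈ cyl (u ++ [c])) : ξ ∈ delimited V c ↔ u ∈ V := by
  refine ⟨?_, fun huV => ⟨u, huV, hξ⟩⟩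
  rintro ⟨v, hv, η, rfl⟩
  obtain ⟨ζ, hζ⟩ := hξ
  rwa [← eq_of_wcat_append_singleton_eq (hV v hv) hu hζ]

theorem isMeagre_inter_congr {Y : Type*} [TopologicalSpace Y] {A B : Set Y}
    (h : IsMeagre (symmDiff A B)) (C : Set Y) : IsMeagre (C ∩ A) ↔ IsMeagre (C ∩ B) := by
  have hmono : ∀ {A B : Set Y}, IsMeagre (symmDiff A B) → IsMeagre (C ∩ B) → IsMeagre (C ∩ A) :=
    fun {A B} hAB hB => (hAB.union hB).mono fun y ⟨hC, hA⟩ =>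
      (em (y ∈ B)).elim (fun hyB => .inr ⟨hC, hyB⟩) fun hyB => .inl (.inl ⟨hA, hyB⟩)
  exact ⟨hmono (symmDiff_comm A B ▸ h), hmono h⟩

section Topology

variable [TopologicalSpace X]

theorem continuous_wcat (u : List X) : Continuous (wcat u) := by
  refine continuous_pi fun n => ?_
  rcases lt_or_ge n u.length with hn | hn
  · have hconst : (fun ξ => wcat u ξ n) = fun _ => u[n] :=
      funext fun ξ => Stream'.get_append_left n u ξ hn
    exact hconst ▸ continuous_const
  · obtain ⟨k, rfl⟩ := Nat.exists_eq_add_of_le hn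
    have heval : (fun ξ => wcat u ξ (u.length + k)) = fun ξ => ξ k :=
      funext fun ξ => Stream'.get_append_right k u ξ
    exact heval ▸ continuous_apply k

variable [DiscreteTopology X]

theorem isOpenMap_wcat (u : List X) : IsOpenMap (wcat u) := by
  induction u with
  | nil => exact IsOpenMap.id
  | cons x u ih =>
    have hletter : IsOpenMap (wcat [x]) := fun U hU => by
      rw [image_wcat_singleton]
      exact ((isOpen_discrete {x}).preimage (continuous_apply 0)).inter
        (hU.preimage (continuous_pi fun n => continuous_apply (n + 1)))
    exact hletter.comp ih

theorem isOpen_cyl (w : List X) : IsOpen (cyl w) := by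
  have hrange : cyl w = range (wcat w) := by
    ext ξ
    exact exists_congr fun η => eq_comm
  exact hrange ▸ (isOpenMap_wcat w).isOpen_range

theorem isOpen_delimited (V : Language X) (c : X) : IsOpen (delimited V c) := by
  have hunion : delimited V c = ⋃ v ∈ (V : Set (List X)), cyl (v ++ [c]) := by
    ext ξ
    simp only [mem_iUnion, exists_prop]
    rfl
  rw [hunion]
  exact isOpen_biUnion fun v _ => isOpen_cyl _

theorem isMeagre_cyl_inter_preimage_delimited_iff {V : Language X} {c : X}
    (hV : ∀ v ∈ V, c ∉ v) {u w : List X} (huw : c ∉ u ++ w) :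
    IsMeagre (cyl (w ++ [c]) ∩ wcat u ⁻¹' delimited V c) ↔ u ++ w ∉ V := by
  have hmem : ∀ ξ ∈ cyl (w ++ [c]), wcat u ξ ∈ delimited V c ↔ u ++ w ∈ V := by
    rintro _ ⟨η, rfl⟩
    exact mem_delimited_iff hV huw ⟨η, by rw [List.append_assoc, wcat_append u]⟩
  by_cases h : u ++ w ∈ V
  · have hcyl : cyl (w ++ [c]) ∩ wcat u ⁻¹' delimited V c = cyl (w ++ [c]) :=
      inter_eq_left.2 fun ξ hξ => (hmem ξ hξ).2 h
    rw [hcyl]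
    exact iff_of_false (not_isMeagre_of_isOpen (isOpen_cyl _) ⟨_, fun _ => c, rfl⟩) (not_not.2 h)
  · have hempty : cyl (w ++ [c]) ∩ wcat u ⁻¹' delimited V c = ∅ :=
      eq_empty_of_forall_notMem fun ξ hξ => h ((hmem ξ hξ.1).1 hξ.2)
    rw [hempty]
    exact iff_of_true .empty h

theorem isRegular_of_isMeagre_symmDiff_delimited {V : Language X} {c : X}
    (hV : ∀ v ∈ V, c ∉ v) {E : Set (ℕ → X)} (hE : IsRegOmega E)
    (hVE : IsMeagre (symmDiff (delimited V c) E)) : V.IsRegular := by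
  let quotientOf : Set (ℕ → X) → Language X :=
    fun R => {w | c ∉ w ∧ ¬ IsMeagre (cyl (w ++ [c]) ∩ R)}
  refine .of_finite_range_leftQuotient
    (((hE.finite_range_preimage_wcat.image quotientOf).insert ⊥).subset ?_)
  rintro _ ⟨u, rfl⟩
  by_cases hu : c ∈ u
  · exact .inl (eq_bot_iff.2 fun w hw => hV _ hw (List.mem_append_left w hu))
  refine .inr ⟨_, ⟨u, rfl⟩, ?_⟩
  have hmeagre : IsMeagre (symmDiff (wcat u ⁻¹' delimited V c) (wcat u ⁻¹' E)) :=
    preimage_symmDiff (f := wcat u) _ E ▸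
      hVE.preimage_of_isOpenMap (continuous_wcat u) (isOpenMap_wcat u)
  ext w
  have hquot : c ∉ w → (¬ IsMeagre (cyl (w ++ [c]) ∩ wcat u ⁻¹' E) ↔ u ++ w ∈ V) := fun hw => by
    rw [← isMeagre_inter_congr hmeagre, isMeagre_cyl_inter_preimage_delimited_iff hV
      (List.mem_append.not.2 (not_or_intro hu hw)), not_not]
  exact ⟨fun h => (hquot h.1).1 h.2, fun h =>
    have hw : c ∉ w := fun hw => hV _ h (List.mem_append_right u hw)
    ⟨hw, (hquot hw).2 h⟩⟩

end Topology

/-! ### The language `V₃` -/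

namespace V3Eq

variable {a b : X} {V : Language X}

theorem induction_on (hV : V3Eq a b V) {P : List X → Prop} {u : List X} (hu : u ∈ V)
    (base : P [a])
    (step : ∀ v₁ v₂ v₃, P v₁ → P v₂ → P v₃ → P ([b] ++ v₁ ++ v₂ ++ v₃)) : P u := by
  induction hn : u.length using Nat.strong_induction_on generalizing u with
  | _ n ih =>
    rcases (hV u).1 hu with rfl | ⟨v₁, h₁, v₂, h₂, v₃, h₃, rfl⟩
    · exact base
    · simp only [List.length_append, List.length_singleton] at hn
      exact step v₁ v₂ v₃ (ih _ (by omega) h₁ rfl) (ih _ (by omega) h₂ rfl)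
        (ih _ (by omega) h₃ rfl)

theorem notMem_of_mem (hV : V3Eq a b V) {c : X} (hca : c ≠ a) (hcb : c ≠ b) {u : List X}
    (hu : u ∈ V) : c ∉ u :=
  hV.induction_on (P := (c ∉ ·)) hu (by simpa using hca)
    fun v₁ v₂ v₃ h₁ h₂ h₃ => by simp [hcb, h₁, h₂, h₃]

theorem count_eq [DecidableEq X] (hV : V3Eq a b V) (hab : a ≠ b) {u : List X} (hu : u ∈ V) :
    u.count a = 2 * u.count b + 1 := by
  refine hV.induction_on (P := fun u => u.count a = 2 * u.count b + 1) hu ?_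
    fun v₁ v₂ v₃ h₁ h₂ h₃ => ?_
  · simp [hab]
  · simp only [List.count_append, h₁, h₂, h₃, List.count_singleton_self,
      List.count_singleton, beq_iff_eq, hab.symm, if_false]
    ring

theorem replicate_append_replicate_mem (hV : V3Eq a b V) (n : ℕ) :
    List.replicate n b ++ List.replicate (2 * n + 1) a ∈ V := by
  have ha : [a] ∈ V := (hV _).2 (.inl rfl)
  induction n with
  | zero => exact ha
  | succ n ih =>
    refine (hV _).2 (.inr ⟨_, ih, _, ha, _, ha, ?_⟩)
    simp [List.replicate_succ, Nat.mul_add, ← List.replicate_succ']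

theorem not_isRegular (hV : V3Eq a b V) (hab : a ≠ b) : ¬ V.IsRegular := by
  classical
  have hinj : Function.Injective fun n => V.leftQuotient (List.replicate n b) := by
    intro n k (hnk : V.leftQuotient (List.replicate n b) = V.leftQuotient (List.replicate k b))
    have hmem : List.replicate (2 * n + 1) a ∈ V.leftQuotient (List.replicate k b) :=
      hnk ▸ hV.replicate_append_replicate_mem n
    simpa [List.count_replicate, hab, hab.symm] using hV.count_eq hab hmem
  exact fun hreg => infinite_range_of_injective hinj
    (hreg.finite_range_leftQuotient.subset (range_comp_subset_range _ V.leftQuotient))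

end V3Eq

theorem stmt18_general [TopologicalSpace X] [DiscreteTopology X] {a b c : X} (hab : a ≠ b)
    (hca : c ≠ a) (hcb : c ≠ b) {V : Language X} (hV : V3Eq a b V) :
    IsOpen (delimited V c) ∧ ∀ E, IsRegOmega E → ¬ IsMeagre (symmDiff (delimited V c) E) :=
  ⟨isOpen_delimited V c, fun _ hE hVE => hV.not_isRegular hab
    (isRegular_of_isMeagre_symmDiff_delimited (fun _ => hV.notMem_of_mem hca hcb) hE hVE)⟩

theorem stmt18 (V₃ : Language (Fin 3))
    (hfix : V3Eq 0 1 V₃)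
    (hleast : ∀ W : Language (Fin 3), V3Eq 0 1 W → ∀ u, u ∈ V₃ → u ∈ W)
    (F₁ : Set (ℕ → Fin 3)) (hF₁ : F₁ = {ξ : ℕ → Fin 3 | ∃ v ∈ V₃, ξ ∈ cyl (v ++ [2])}) :
    @IsOpen _ (cantorTop (Fin 3)) F₁ ∧ ¬ HasABP F₁ := by
  obtain ⟨hopen, hreg⟩ := stmt18_general (a := 0) (b := 1) (c := 2)
    (by decide) (by decide) (by decide) hfix
  exact hF₁ ▸ ⟨hopen, fun ⟨E, _, hE, _, _, hmeagre, hsub⟩ => hreg E hE (hmeagre.mono hsub)⟩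

end AutoBaire
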